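/- Let X and Y be finite nonempty alphabets, P_X a probability mass function on X with P_X(x) > 0 for all x, and W a channel with W(y|x) > 0 for all x, y and Σ_y W(y|x) = 1 for each x. Let P_Y(y) = Σ_x P_X(x)W(y|x), P_{X|Y}(x|y) = P_X(x)W(y|x)/P_Y(y), and H(X|Y) = −Σ_{x,y} P_X(x)W(y|x) log₂ P_{X|Y}(x|y). Let U : X×Y → (0,∞), fix θ > 0, and set U_θ(x|y) = U(x,y)^θ / Σ_{x'} U(x',y)^θ. If for every ε > 0 there exists ρ ∈ [0,1] such that −Σ_x P_X(x) log₂( Σ_y W(y|x) / U_θ(x|y)^ρ ) + ρ( H(X|Y) + ε ) > 0, then U_θ(x|y) = P_{X|Y}(x|y) for every x ∈ X and every y ∈ Y with P_Y(y) > 0. -/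

import Mathlib

/-- The normalized metric `U_θ(x|y) = U(x,y)^θ / Σ_{x'} U(x',y)^θ`. -/
noncomputable def Utheta {X Y : Type*} [Fintype X] (U : X → Y → ℝ) (θ : ℝ)
    (x : X) (y : Y) : ℝ :=
  U x y ^ θ / ∑ x', U x' y ^ θ

/-!
By Jensen's inequality the first term of the exponent is at most `ρ` times the mean of
`log₂ U_θ(X|Y)`. A positive exponent at every `ε > 0` therefore forces the cross entropy
`−E log₂ U_θ(X|Y)` to be at most `H(X|Y)`. Their difference is the relative entropy of the
joint law from `U_θ(x|y) P_Y(y)`, so the equality case of Gibbs' inequality identifies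
`U_θ` with the posterior.
-/

section FiniteInequalities

open Finset Real InformationTheory

variable {ι : Type*} {s : Finset ι}

theorem mul_klFun_div {p q : ℝ} (hpq : q = 0 → p = 0) :
    q * klFun (p / q) = p * log (p / q) - (p - q) := by
  rcases eq_or_ne q 0 with hq | hq
  · simp [hq, hpq hq]
  · rw [klFun_apply]
    field_simp
    ring

theorem eq_of_sum_mul_log_div_nonpos {p q : ι → ℝ} (hp : ∀ i ∈ s, 0 ≤ p i)
    (hq : ∀ i ∈ s, 0 ≤ q i) (hpq : ∀ i ∈ s, q i = 0 → p i = 0)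
    (hsum : ∑ i ∈ s, q i ≤ ∑ i ∈ s, p i) (hlog : ∑ i ∈ s, p i * log (p i / q i) ≤ 0) :
    ∀ i ∈ s, p i = q i := by
  have term_nonneg : ∀ i ∈ s, 0 ≤ q i * klFun (p i / q i) := fun i hi =>
    mul_nonneg (hq i hi) (klFun_nonneg (div_nonneg (hp i hi) (hq i hi)))
  have sum_nonpos : ∑ i ∈ s, q i * klFun (p i / q i) ≤ 0 := by
    rw [sum_congr rfl fun i hi => mul_klFun_div (hpq i hi), sum_sub_distrib, sum_sub_distrib]
    linarith
  have term_eq_zero := (sum_eq_zero_iff_of_nonneg term_nonneg).mp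
    (sum_nonpos.antisymm (sum_nonneg term_nonneg))
  intro i hi
  rcases eq_or_ne (q i) 0 with hqi | hqi
  · rw [hqi, hpq i hi hqi]
  · have hkl := (mul_eq_zero.mp (term_eq_zero i hi)).resolve_left hqi
    exact (div_eq_one_iff_eq hqi).mp
      ((klFun_eq_zero_iff (div_nonneg (hp i hi) (hq i hi))).mp hkl)

variable {b : ℝ} {w : ι → ℝ}

theorem sum_mul_logb_le_logb_sum_mul {z : ι → ℝ} (hb : 1 < b) (hw : ∀ i ∈ s, 0 ≤ w i)
    (hw1 : ∑ i ∈ s, w i = 1) (hz : ∀ i ∈ s, w i ≠ 0 → 0 < z i) :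
    ∑ i ∈ s, w i * logb b (z i) ≤ logb b (∑ i ∈ s, w i * z i) := by
  have jensen := strictConcaveOn_log_Ioi.concaveOn.le_map_sum
    (t := s.filter (w · ≠ 0)) (w := w) (p := z)
    (fun i hi => hw i (mem_of_mem_filter i hi)) ((sum_filter_ne_zero s).trans hw1)
    (fun i hi => hz i (mem_of_mem_filter i hi) (mem_filter.mp hi).2)
  simp only [smul_eq_mul] at jensen
  rw [sum_filter_of_ne fun _ _ => left_ne_zero_of_mul,
    sum_filter_of_ne fun _ _ => left_ne_zero_of_mul] at jensen
  simp only [logb, ← mul_div_assoc, ← sum_div]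
  exact div_le_div_of_nonneg_right jensen (log_pos hb).le

theorem neg_mul_sum_mul_logb_le_logb_sum_div_rpow {v : ι → ℝ} (hb : 1 < b)
    (hw : ∀ i ∈ s, 0 ≤ w i) (hw1 : ∑ i ∈ s, w i = 1) (hv : ∀ i ∈ s, w i ≠ 0 → 0 < v i)
    (ρ : ℝ) : -(ρ * ∑ i ∈ s, w i * logb b (v i)) ≤ logb b (∑ i ∈ s, w i / v i ^ ρ) := by
  have term_eq : ∀ i ∈ s, -(ρ * (w i * logb b (v i))) = w i * logb b (v i ^ ρ)⁻¹ := by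
    intro i hi
    rcases eq_or_ne (w i) 0 with hwi | hwi
    · simp [hwi]
    · rw [logb_inv, logb_rpow_eq_mul_logb_of_pos (hv i hi hwi)]
      ring
  calc -(ρ * ∑ i ∈ s, w i * logb b (v i))
      = ∑ i ∈ s, w i * logb b (v i ^ ρ)⁻¹ := by
        rw [mul_sum, ← sum_neg_distrib, sum_congr rfl term_eq]
    _ ≤ logb b (∑ i ∈ s, w i * (v i ^ ρ)⁻¹) :=
        sum_mul_logb_le_logb_sum_mul hb hw hw1 fun i hi hwi =>
          inv_pos.mpr (rpow_pos_of_pos (hv i hi hwi) ρ)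
    _ = logb b (∑ i ∈ s, w i / v i ^ ρ) := by simp only [div_eq_mul_inv]

end FiniteInequalities

section NormalizedMetric

variable {X Y : Type*} [Fintype X]

theorem Utheta_pos {U : X → Y → ℝ} (hU : ∀ x y, 0 < U x y) (θ : ℝ) (x : X) (y : Y) :
    0 < Utheta U θ x y :=
  div_pos (Real.rpow_pos_of_pos (hU x y) θ)
    (Finset.sum_pos (fun x' _ => Real.rpow_pos_of_pos (hU x' y) θ) ⟨x, Finset.mem_univ x⟩)

theorem sum_Utheta_le_one (U : X → Y → ℝ) (θ : ℝ) (y : Y) : ∑ x, Utheta U θ x y ≤ 1 := by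
  simp only [Utheta, ← Finset.sum_div]
  exact div_self_le_one _

end NormalizedMetric

section Channel

open Finset Real

variable {X Y : Type*} [Fintype X]

/-- The output distribution `P_Y` of the channel `W` with input distribution `P`. -/
def outputDist (P : X → ℝ) (W : X → Y → ℝ) (y : Y) : ℝ :=
  ∑ x, P x * W x y

/-- The posterior `P_{X|Y}(x|y)` of the input given the output; it is `0` if `P_Y(y) = 0`. -/
noncomputable def posterior (P : X → ℝ) (W : X → Y → ℝ) (x : X) (y : Y) : ℝ :=
  P x * W x y / outputDist P W y

variable {P : X → ℝ} {W V : X → Y → ℝ}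

theorem outputDist_nonneg (hP : ∀ x, 0 ≤ P x) (hW : ∀ x y, 0 ≤ W x y) (y : Y) :
    0 ≤ outputDist P W y :=
  sum_nonneg fun x _ => mul_nonneg (hP x) (hW x y)

theorem outputDist_ne_zero (hP : ∀ x, 0 ≤ P x) (hW : ∀ x y, 0 ≤ W x y) {x : X} {y : Y}
    (hxy : P x * W x y ≠ 0) : outputDist P W y ≠ 0 := fun hy =>
  hxy ((sum_eq_zero_iff_of_nonneg fun x _ => mul_nonneg (hP x) (hW x y)).mp hy x (mem_univ x))

variable [Fintype Y]

/-- The conditional entropy `H(X|Y)` in bits. -/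
noncomputable def condEntropy (P : X → ℝ) (W : X → Y → ℝ) : ℝ :=
  -∑ x, ∑ y, P x * W x y * logb 2 (posterior P W x y)

/-- The conditional cross entropy `−E log₂ V(X|Y)` of a normalized metric `V`, in bits: the
analogue of `H(X|Y)` for a decoder that uses `V` in place of the posterior. -/
noncomputable def condCrossEntropy (P : X → ℝ) (W V : X → Y → ℝ) : ℝ :=
  -∑ x, ∑ y, P x * W x y * logb 2 (V x y)

/-- The rate-independent part of the error exponent of decoding with the normalized metric `V`.
At rate `I(X;Y) − ε` the exponent for the parameter `ρ` is
`metricExponent P W V ρ + ρ (H(X|Y) + ε)`. -/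
noncomputable def metricExponent (P : X → ℝ) (W V : X → Y → ℝ) (ρ : ℝ) : ℝ :=
  -∑ x, P x * logb 2 (∑ y, W x y / V x y ^ ρ)

theorem metricExponent_le (hP : ∀ x, 0 ≤ P x) (hW : ∀ x y, 0 ≤ W x y)
    (hW1 : ∀ x, ∑ y, W x y = 1) (hV : ∀ x y, P x * W x y ≠ 0 → 0 < V x y) (ρ : ℝ) :
    metricExponent P W V ρ ≤ -(ρ * condCrossEntropy P W V) := by
  have jensen : ∀ x, -(ρ * (P x * ∑ y, W x y * logb 2 (V x y))) ≤
      P x * logb 2 (∑ y, W x y / V x y ^ ρ) := by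
    intro x
    rcases eq_or_ne (P x) 0 with hPx | hPx
    · simp [hPx]
    · calc -(ρ * (P x * ∑ y, W x y * logb 2 (V x y)))
          = P x * -(ρ * ∑ y, W x y * logb 2 (V x y)) := by ring
        _ ≤ P x * logb 2 (∑ y, W x y / V x y ^ ρ) :=
          mul_le_mul_of_nonneg_left
            (neg_mul_sum_mul_logb_le_logb_sum_div_rpow one_lt_two (fun y _ => hW x y) (hW1 x)
              (fun y _ hWxy => hV x y (mul_ne_zero hPx hWxy)) ρ) (hP x)
  have sum_jensen := sum_le_sum fun x (_ : x ∈ univ) => jensen x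
  simp only [sum_neg_distrib, ← mul_sum] at sum_jensen
  simp only [metricExponent, condCrossEntropy, mul_assoc, ← mul_sum]
  linarith

theorem condCrossEntropy_le_condEntropy_of_exponent_pos (hP : ∀ x, 0 ≤ P x)
    (hW : ∀ x y, 0 ≤ W x y) (hW1 : ∀ x, ∑ y, W x y = 1)
    (hV : ∀ x y, P x * W x y ≠ 0 → 0 < V x y)
    (hexp : ∀ ε > 0, ∃ ρ ≥ 0, 0 < metricExponent P W V ρ + ρ * (condEntropy P W + ε)) :
    condCrossEntropy P W V ≤ condEntropy P W := by
  refine le_of_forall_pos_le_add fun ε hε => ?_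
  obtain ⟨ρ, hρ, hpos⟩ := hexp ε hε
  have gap_pos : 0 < ρ * (condEntropy P W + ε - condCrossEntropy P W V) := by
    linarith [metricExponent_le hP hW hW1 hV ρ]
  linarith [pos_of_mul_pos_right gap_pos hρ]

theorem condCrossEntropy_sub_condEntropy (hV : ∀ x y, P x * W x y ≠ 0 → V x y ≠ 0)
    (hY : ∀ x y, P x * W x y ≠ 0 → outputDist P W y ≠ 0) :
    condCrossEntropy P W V - condEntropy P W =
      (∑ x, ∑ y, P x * W x y * log (P x * W x y / (V x y * outputDist P W y))) / log 2 := by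
  have term_eq : ∀ x y, P x * W x y * logb 2 (posterior P W x y) -
      P x * W x y * logb 2 (V x y) =
        P x * W x y * log (P x * W x y / (V x y * outputDist P W y)) / log 2 := by
    intro x y
    rcases eq_or_ne (P x * W x y) 0 with hxy | hxy
    · simp [hxy]
    · rw [posterior, logb, logb, log_div hxy (hY x y hxy),
        log_div hxy (mul_ne_zero (hV x y hxy) (hY x y hxy)), log_mul (hV x y hxy) (hY x y hxy)]
      ring
  simp only [sum_div, ← term_eq, sum_sub_distrib, condCrossEntropy, condEntropy]
  ring

theorem sum_mul_outputDist_le (hP : ∀ x, 0 ≤ P x) (hW : ∀ x y, 0 ≤ W x y)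
    (hV1 : ∀ y, ∑ x, V x y ≤ 1) :
    ∑ x, ∑ y, V x y * outputDist P W y ≤ ∑ x, ∑ y, P x * W x y :=
  calc ∑ x, ∑ y, V x y * outputDist P W y
      = ∑ y, (∑ x, V x y) * outputDist P W y := by
        rw [sum_comm]
        simp only [sum_mul]
    _ ≤ ∑ y, outputDist P W y :=
        sum_le_sum fun y _ => mul_le_of_le_one_left (outputDist_nonneg hP hW y) (hV1 y)
    _ = ∑ x, ∑ y, P x * W x y := sum_comm

theorem eq_posterior_of_condCrossEntropy_le (hP : ∀ x, 0 ≤ P x) (hW : ∀ x y, 0 ≤ W x y)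
    (hV0 : ∀ x y, 0 ≤ V x y) (hV1 : ∀ y, ∑ x, V x y ≤ 1)
    (hV : ∀ x y, P x * W x y ≠ 0 → 0 < V x y)
    (hle : condCrossEntropy P W V ≤ condEntropy P W) {y : Y} (hy : 0 < outputDist P W y)
    (x : X) : V x y = posterior P W x y := by
  have joint_nonneg : ∀ x y, 0 ≤ P x * W x y := fun x y => mul_nonneg (hP x) (hW x y)
  have output_ne_zero : ∀ x y, P x * W x y ≠ 0 → outputDist P W y ≠ 0 := fun _ _ =>
    outputDist_ne_zero hP hW
  have divergence_nonpos :
      ∑ x, ∑ y, P x * W x y * log (P x * W x y / (V x y * outputDist P W y)) ≤ 0 := by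
    have hdiff := condCrossEntropy_sub_condEntropy (fun x y hxy => (hV x y hxy).ne')
      output_ne_zero
    rw [eq_div_iff (log_pos one_lt_two).ne'] at hdiff
    rw [← hdiff]
    exact mul_nonpos_of_nonpos_of_nonneg (sub_nonpos.mpr hle) (log_pos one_lt_two).le
  have mass_le := sum_mul_outputDist_le hP hW hV1
  rw [← Fintype.sum_prod_type'] at divergence_nonpos
  rw [← Fintype.sum_prod_type', ← Fintype.sum_prod_type'] at mass_le
  have joint_eq := eq_of_sum_mul_log_div_nonpos
    (fun z _ => joint_nonneg z.1 z.2)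
    (fun z _ => mul_nonneg (hV0 z.1 z.2) (outputDist_nonneg hP hW z.2))
    (fun z _ hz => by_contra fun hxy =>
      mul_ne_zero (hV z.1 z.2 hxy).ne' (output_ne_zero z.1 z.2 hxy) hz)
    mass_le divergence_nonpos (x, y) (mem_univ _)
  exact eq_div_of_mul_eq hy.ne' joint_eq.symm

theorem metric_achieving_mutual_information_is_posterior_general
    (hP : ∀ x, 0 ≤ P x) (hW : ∀ x y, 0 ≤ W x y) (hW1 : ∀ x, ∑ y, W x y = 1)
    (hV0 : ∀ x y, 0 ≤ V x y) (hV1 : ∀ y, ∑ x, V x y ≤ 1)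
    (hV : ∀ x y, P x * W x y ≠ 0 → 0 < V x y)
    (hexp : ∀ ε > 0, ∃ ρ ≥ 0, 0 < metricExponent P W V ρ + ρ * (condEntropy P W + ε))
    {y : Y} (hy : 0 < outputDist P W y) (x : X) : V x y = posterior P W x y :=
  eq_posterior_of_condCrossEntropy_le hP hW hV0 hV1 hV
    (condCrossEntropy_le_condEntropy_of_exponent_pos hP hW hW1 hV hexp) hy x

end Channel

/-- Necessity of the MAP metric for achieving the mutual information rate.
If for every `ε > 0` there is `ρ ∈ [0,1]` with
`−Σ_x P_X(x) log₂( Σ_y W(y|x)/U_θ(x|y)^ρ ) + ρ(H(X|Y) + ε) > 0`,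
then `U_θ(x|y) = P_{X|Y}(x|y)` for every `x` and every `y` with `P_Y(y) > 0`. -/
theorem metric_achieving_mutual_information_is_posterior
    {X Y : Type*} [Fintype X] [Fintype Y] [Nonempty X] [Nonempty Y]
    (P : X → ℝ) (hP0 : ∀ x, 0 < P x) (hP1 : ∑ x, P x = 1)
    (W : X → Y → ℝ) (hW : ∀ x y, 0 < W x y) (hWsum : ∀ x, ∑ y, W x y = 1)
    (U : X → Y → ℝ) (hU : ∀ x y, 0 < U x y) (θ : ℝ) (hθ : 0 < θ)
    (hach : ∀ ε > (0:ℝ), ∃ ρ ∈ Set.Icc (0:ℝ) 1,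
      0 < -∑ x, P x * Real.logb 2 (∑ y, W x y / Utheta U θ x y ^ ρ)
          + ρ * ((-∑ x, ∑ y, P x * W x y *
              Real.logb 2 (P x * W x y / ∑ x', P x' * W x' y)) + ε)) :
    ∀ x y, 0 < ∑ x', P x' * W x' y →
      Utheta U θ x y = P x * W x y / ∑ x', P x' * W x' y :=
  fun x _ hy => metric_achieving_mutual_information_is_posterior_general (fun x => (hP0 x).le)
    (fun x y => (hW x y).le) hWsum (fun x y => (Utheta_pos hU θ x y).le) (sum_Utheta_le_one U θ)
    (fun x y _ => Utheta_pos hU θ x y)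
    (fun ε hε => (hach ε hε).imp fun _ h => ⟨h.1.1, h.2⟩) hy x
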